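/- Let F_q be a finite field with q ≥ 11 elements and let k, t be integers with k ≥ 17 and t ≥ 17. Let E′ be a codimension-1 subspace of F_q[x]_{<k}, let c ∈ F_q[x] be a polynomial of degree k − 1 + t, and let R = E′ ⊕ span(c). Define Γ := { (f_1, f_2, f_3) ∈ R³ : (f_1, f_2, f_3) ∉ E′³ and dim( span{f_1, f_2, f_3} · R ) ≤ 2k + 2 }, where span{f_1,f_2,f_3}·R is the subspace of F_q[x] spanned by all products g r with g ∈ span{f_1,f_2,f_3} and r ∈ R. Then |E′|³ / ( |E′|³ + |Γ| ) ≥ 1 − 1/q²; equivalently, a uniformly random triple (f_1, f_2, f_3) ∈ R³ with dim( span{f_1,f_2,f_3} · R ) ≤ 2k+2 lies in E′³ with probability at least 1 − 1/q². -/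

import Mathlib

open Polynomial

/-- The product of two subspaces of `F[x]`: the span of all products `f g`. -/
noncomputable def mulSpace (F : Type*) [Field F] (P R : Submodule F (Polynomial F)) :
    Submodule F (Polynomial F) :=
  Submodule.span F {x | ∃ f ∈ P, ∃ g ∈ R, x = f * g}

/-!
If `f ∈ R \ E'` has degree `k - 1 + t`, any triple through `f` can be reduced modulo `f` to a pair
`(g₁, g₂)` in `E'`, and then `span{f, g₁, g₂} · R` contains `g₁ E' + g₂ E' + f R`. The summand `f R`
meets the rest in a space of dimension at most `max (k - t) 0` for degree reasons. Writing
`(g₁, g₂) = d (a, b)` with `a`, `b` coprime, an element of `g₁ E' ∩ g₂ E'` is `d a s` with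
`b ∣ s`, so this intersection has dimension at most `k - max (deg a) (deg b)`. Hence the product
space can only be small when `g₁ / g₂` has small height as a rational function, and there are few
such pairs because a large common factor `d` leaves few degrees of freedom.
-/

section ProductSpace

variable {F : Type*} [Field F]

lemma mulSpace_eq_mul (P R : Submodule F F[X]) : mulSpace F P R = P * R := by
  refine le_antisymm (Submodule.span_le.2 ?_) (Submodule.mul_le.2 ?_)
  · rintro _ ⟨f, hf, g, hg, rfl⟩
    exact Submodule.mul_mem_mul hf hg
  · intro f hf g hg
    exact Submodule.subset_span ⟨f, hf, g, hg, rfl⟩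

lemma map_mulLeft_le_mul {E R P : Submodule F F[X]} (hE : E ≤ R) {g : F[X]} (hg : g ∈ P) :
    E.map (LinearMap.mulLeft F g) ≤ P * R := by
  rintro _ ⟨r, hr, rfl⟩
  exact Submodule.mul_mem_mul hg (hE hr)

lemma finrank_map_mulLeft {g : F[X]} (hg : g ≠ 0) (V : Submodule F F[X]) :
    Module.finrank F (V.map (LinearMap.mulLeft F g)) = Module.finrank F V :=
  (Submodule.equivMapOfInjective (LinearMap.mulLeft F g)
    (mul_right_injective₀ hg) V).finrank_eq.symm

end ProductSpace

section Degree

variable {F : Type*} [Field F]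

lemma finrank_degreeLT (n : ℕ) : Module.finrank F (degreeLT F n) = n := by
  simp [Module.finrank_eq_card_basis (degreeLT.basis F n)]

lemma mem_degreeLT_succ_of_natDegree_le {f : F[X]} {n : ℕ} (hf : f.natDegree ≤ n) :
    f ∈ degreeLT F (n + 1) :=
  mem_degreeLT.2 (degree_lt_iff_coeff_zero _ _ |>.2 fun _ hm =>
    coeff_eq_zero_of_natDegree_lt (by omega))

lemma mul_mem_degreeLT {f g : F[X]} {m n : ℕ} (hf : f ∈ degreeLT F m) (hg : g ∈ degreeLT F n) :
    f * g ∈ degreeLT F (m + n - 1) := by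
  rcases eq_or_ne (f * g) 0 with h | h
  · exact h ▸ zero_mem _
  have hf0 := left_ne_zero_of_mul h
  have hg0 := right_ne_zero_of_mul h
  rw [mem_degreeLT, ← natDegree_lt_iff_degree_lt hf0] at hf
  rw [mem_degreeLT, ← natDegree_lt_iff_degree_lt hg0] at hg
  rw [mem_degreeLT, ← natDegree_lt_iff_degree_lt h, natDegree_mul hf0 hg0]
  omega

lemma mem_degreeLT_sub_natDegree_of_mul_mem {f s : F[X]} {k : ℕ} (hf : f ≠ 0)
    (h : f * s ∈ degreeLT F k) : s ∈ degreeLT F (k - f.natDegree) := by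
  rcases eq_or_ne s 0 with rfl | hs
  · exact zero_mem _
  rw [mem_degreeLT, ← natDegree_lt_iff_degree_lt (mul_ne_zero hf hs), natDegree_mul hf hs] at h
  rw [mem_degreeLT, ← natDegree_lt_iff_degree_lt hs]
  omega

lemma map_mulLeft_le_degreeLT {E : Submodule F F[X]} {g : F[X]} {m n : ℕ}
    (hg : g ∈ degreeLT F m) (hE : E ≤ degreeLT F n) :
    E.map (LinearMap.mulLeft F g) ≤ degreeLT F (m + n - 1) := by
  rintro _ ⟨e, he, rfl⟩
  exact mul_mem_degreeLT hg (hE he)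

lemma finrank_degreeLT_inf_range_mulLeft_le (f : F[X]) (k : ℕ) :
    Module.finrank F ↥(degreeLT F k ⊓ LinearMap.range (LinearMap.mulLeft F f)) ≤
      k - f.natDegree := by
  have hle : degreeLT F k ⊓ LinearMap.range (LinearMap.mulLeft F f) ≤
      (degreeLT F (k - f.natDegree)).map (LinearMap.mulLeft F f) := by
    rintro _ ⟨hk, s, rfl⟩
    rcases eq_or_ne f 0 with rfl | hf
    · exact ⟨0, zero_mem _, by simp⟩
    · exact ⟨s, mem_degreeLT_sub_natDegree_of_mul_mem hf hk, rfl⟩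
  calc _ ≤ _ := Submodule.finrank_mono hle
    _ ≤ _ := Submodule.finrank_map_le _ _
    _ = _ := finrank_degreeLT _

lemma finrank_map_mulLeft_inf_range_mulLeft_le {E : Submodule F F[X]} {k : ℕ}
    (hE : E ≤ degreeLT F k) {d a b : F[X]} (hd : d ≠ 0) (hab : IsRelPrime a b) :
    Module.finrank F ↥(E.map (LinearMap.mulLeft F (d * a)) ⊓
      LinearMap.range (LinearMap.mulLeft F (d * b))) ≤ k - b.natDegree := by
  have hle : E.map (LinearMap.mulLeft F (d * a)) ⊓ LinearMap.range (LinearMap.mulLeft F (d * b)) ≤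
      (degreeLT F k ⊓ LinearMap.range (LinearMap.mulLeft F b)).map
        (LinearMap.mulLeft F (d * a)) := by
    rintro _ ⟨⟨e, he, rfl⟩, s, hs⟩
    have hcancel : a * e = b * s :=
      mul_left_cancel₀ hd (by simpa only [LinearMap.mulLeft_apply, mul_assoc] using hs.symm)
    obtain ⟨u, rfl⟩ : b ∣ e := hab.symm.dvd_of_dvd_mul_left ⟨s, hcancel⟩
    exact ⟨b * u, ⟨hE he, u, rfl⟩, rfl⟩
  calc _ ≤ _ := Submodule.finrank_mono hle
    _ ≤ _ := Submodule.finrank_map_le _ _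
    _ ≤ _ := finrank_degreeLT_inf_range_mulLeft_le b k

lemma finrank_map_mulLeft_inf_map_mulLeft_le {E : Submodule F F[X]} {k : ℕ}
    (hE : E ≤ degreeLT F k) {d a b : F[X]} (hd : d ≠ 0) (hab : IsRelPrime a b) :
    Module.finrank F ↥(E.map (LinearMap.mulLeft F (d * a)) ⊓ E.map (LinearMap.mulLeft F (d * b))) ≤
      k - max a.natDegree b.natDegree := by
  have : FiniteDimensional F E := Submodule.finiteDimensional_of_le hE
  rcases max_choice a.natDegree b.natDegree with h | h <;> rw [h]
  · rw [inf_comm]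
    exact (Submodule.finrank_mono (inf_le_inf_left _ LinearMap.map_le_range)).trans
      (finrank_map_mulLeft_inf_range_mulLeft_le hE hd hab.symm)
  · exact (Submodule.finrank_mono (inf_le_inf_left _ LinearMap.map_le_range)).trans
      (finrank_map_mulLeft_inf_range_mulLeft_le hE hd hab)

theorem two_mul_finrank_add_finrank_le_finrank_mul_add {E R P : Submodule F F[X]}
    [FiniteDimensional F R] [FiniteDimensional F P] {k : ℕ} (hE : E ≤ degreeLT F k) (hER : E ≤ R)
    {d a b f : F[X]} (ha : d * a ≠ 0) (hb : d * b ≠ 0) (hab : IsRelPrime a b)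
    (hak : d * a ∈ degreeLT F k) (hbk : d * b ∈ degreeLT F k)
    (haP : d * a ∈ P) (hbP : d * b ∈ P) (hf : f ≠ 0) (hfP : f ∈ P) :
    2 * Module.finrank F E + Module.finrank F R ≤
      Module.finrank F ↥(P * R) + (k - max a.natDegree b.natDegree) +
        (k + k - 1 - f.natDegree) := by
  have : FiniteDimensional F E := Submodule.finiteDimensional_of_le hE
  have : FiniteDimensional F ↥(P * R) := Module.Finite.iff_fg.2
    ((Module.Finite.iff_fg.1 inferInstance).mul (Module.Finite.iff_fg.1 inferInstance))
  set A := E.map (LinearMap.mulLeft F (d * a)) with hA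
  set B := E.map (LinearMap.mulLeft F (d * b)) with hB
  set C := R.map (LinearMap.mulLeft F f) with hC
  have hAB : Module.finrank F ↥(A ⊓ B) ≤ k - max a.natDegree b.natDegree :=
    finrank_map_mulLeft_inf_map_mulLeft_le hE (left_ne_zero_of_mul ha) hab
  have hABC : Module.finrank F ↥((A ⊔ B) ⊓ C) ≤ k + k - 1 - f.natDegree :=
    (Submodule.finrank_mono (inf_le_inf (sup_le (map_mulLeft_le_degreeLT hak hE)
      (map_mulLeft_le_degreeLT hbk hE)) LinearMap.map_le_range)).trans
      (finrank_degreeLT_inf_range_mulLeft_le f _)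
  have hsum : Module.finrank F ↥(A ⊔ B ⊔ C) ≤ Module.finrank F ↥(P * R) :=
    Submodule.finrank_mono (sup_le (sup_le (map_mulLeft_le_mul hER haP)
      (map_mulLeft_le_mul hER hbP)) (map_mulLeft_le_mul le_rfl hfP))
  have hdimAB := Submodule.finrank_sup_add_finrank_inf_eq A B
  have hdimABC := Submodule.finrank_sup_add_finrank_inf_eq (A ⊔ B) C
  rw [hA, hB, finrank_map_mulLeft ha, finrank_map_mulLeft hb, ← hA, ← hB] at hdimAB
  rw [hC, finrank_map_mulLeft hf, ← hC] at hdimABC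
  omega

end Degree

section OneDimensionalExtension

variable {F V : Type*} [Field F] [AddCommGroup V] [Module F V] {E : Submodule F V} {c : V}

lemma finrank_sup_span_singleton [FiniteDimensional F E] (hc : c ∉ E) :
    Module.finrank F ↥(E ⊔ Submodule.span F {c}) = Module.finrank F E + 1 := by
  have h := Submodule.finrank_sup_add_finrank_inf_eq E (Submodule.span F {c})
  rwa [(Submodule.disjoint_span_singleton_of_notMem hc).eq_bot, finrank_bot, add_zero,
    finrank_span_singleton (ne_of_mem_of_not_mem (zero_mem E) hc).symm] at h

lemma exists_sub_smul_mem_of_mem_sup_span_singleton {f r : V}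
    (hf : f ∈ E ⊔ Submodule.span F {c}) (hfE : f ∉ E) (hr : r ∈ E ⊔ Submodule.span F {c}) :
    ∃ μ : F, r - μ • f ∈ E := by
  obtain ⟨e, he, l, rfl⟩ : ∃ e ∈ E, ∃ l : F, e + l • c = f := by
    simpa [Submodule.mem_sup, Submodule.mem_span_singleton] using hf
  obtain ⟨e', he', l', rfl⟩ : ∃ e' ∈ E, ∃ l' : F, e' + l' • c = r := by
    simpa [Submodule.mem_sup, Submodule.mem_span_singleton] using hr
  have hl : l ≠ 0 := by
    rintro rfl
    exact hfE (by simpa using he)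
  have hdiff : e' + l' • c - (l' / l) • (e + l • c) = e' - (l' / l) • e := by
    rw [smul_add, smul_smul, div_mul_cancel₀ _ hl]
    abel
  exact ⟨l' / l, hdiff ▸ sub_mem he' (E.smul_mem _ he)⟩

end OneDimensionalExtension

section Exceptional

variable {F : Type*} [Field F] {E P : Submodule F F[X]} {c f g₁ g₂ : F[X]} {k ℓ : ℕ}

lemma degree_eq_of_mem_sup_span_singleton (hE : E ≤ degreeLT F k) (hc : c ∉ degreeLT F k)
    (hf : f ∈ E ⊔ Submodule.span F {c}) (hfE : f ∉ E) : f.degree = c.degree := by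
  obtain ⟨e, he, l, rfl⟩ : ∃ e ∈ E, ∃ l : F, e + l • c = f := by
    simpa [Submodule.mem_sup, Submodule.mem_span_singleton] using hf
  have hl : l ≠ 0 := by
    rintro rfl
    exact hfE (by simpa using he)
  have hlc : (l • c).degree = c.degree := by rw [smul_eq_C_mul, degree_C_mul hl]
  rw [degree_add_eq_right_of_degree_lt, hlc]
  rw [mem_degreeLT, not_lt] at hc
  exact hlc ▸ (mem_degreeLT.1 (hE he)).trans_le hc

/-- The pairs of polynomials of degree less than `k` whose ratio has height less than `ℓ` as a
rational function: after removing a common factor `d`, both entries have degree at most some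
`m < ℓ`. The few pairs `(d * a, d * b)` with `a`, `b` not coprime that the degree bounds admit are
harmless, as the set is only used for upper bounds. -/
def lowHeightPairs (F : Type*) [Field F] (k ℓ : ℕ) : Set (F[X] × F[X]) :=
  {p | ∃ m < ℓ, ∃ d ∈ degreeLT F (k - m), ∃ a ∈ degreeLT F (m + 1), ∃ b ∈ degreeLT F (m + 1),
    (d * a, d * b) = p}

lemma mul_mem_lowHeightPairs {d a b : F[X]} (ha : a ≠ 0) (hb : b ≠ 0)
    (hda : d * a ∈ degreeLT F k) (hdb : d * b ∈ degreeLT F k)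
    (hab : max a.natDegree b.natDegree < ℓ) : (d * a, d * b) ∈ lowHeightPairs F k ℓ := by
  refine ⟨_, hab, d, ?_, a, mem_degreeLT_succ_of_natDegree_le (le_max_left _ _),
    b, mem_degreeLT_succ_of_natDegree_le (le_max_right _ _), rfl⟩
  rcases max_choice a.natDegree b.natDegree with h | h <;> rw [h]
  · exact mem_degreeLT_sub_natDegree_of_mul_mem ha (mul_comm d a ▸ hda)
  · exact mem_degreeLT_sub_natDegree_of_mul_mem hb (mul_comm d b ▸ hdb)

lemma zero_left_mem_lowHeightPairs (hℓ : 0 < ℓ) (hg : g₁ ∈ degreeLT F k) :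
    (0, g₁) ∈ lowHeightPairs F k ℓ :=
  ⟨0, hℓ, g₁, hg, 0, zero_mem _, 1, mem_degreeLT_succ_of_natDegree_le (by simp), by simp⟩

lemma zero_right_mem_lowHeightPairs (hℓ : 0 < ℓ) (hg : g₁ ∈ degreeLT F k) :
    (g₁, 0) ∈ lowHeightPairs F k ℓ :=
  ⟨0, hℓ, g₁, hg, 1, mem_degreeLT_succ_of_natDegree_le (by simp), 0, zero_mem _, by simp⟩

theorem mem_lowHeightPairs_of_finrank_mul_lt {R : Submodule F F[X]} [FiniteDimensional F R]
    [FiniteDimensional F P] (hE : E ≤ degreeLT F k) (hER : E ≤ R) (hℓ : 0 < ℓ)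
    (hg₁ : g₁ ∈ degreeLT F k) (hg₂ : g₂ ∈ degreeLT F k) (hg₁P : g₁ ∈ P) (hg₂P : g₂ ∈ P)
    (hf : f ≠ 0) (hfP : f ∈ P)
    (hdim : Module.finrank F ↥(P * R) + (k - ℓ) + (k + k - 1 - f.natDegree) <
      2 * Module.finrank F E + Module.finrank F R) :
    (g₁, g₂) ∈ lowHeightPairs F k ℓ := by
  rcases eq_or_ne g₁ 0 with rfl | hg₁0
  · exact zero_left_mem_lowHeightPairs hℓ hg₂
  rcases eq_or_ne g₂ 0 with rfl | hg₂0
  · exact zero_right_mem_lowHeightPairs hℓ hg₁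
  obtain ⟨a, b, d, hab, rfl, rfl⟩ :=
    UniqueFactorizationMonoid.exists_reduced_factors g₁ hg₁0 g₂
  refine mul_mem_lowHeightPairs (right_ne_zero_of_mul hg₁0) (right_ne_zero_of_mul hg₂0) hg₁ hg₂ ?_
  have hlower := two_mul_finrank_add_finrank_le_finrank_mul_add hE hER hg₁0 hg₂0 hab hg₁ hg₂
    hg₁P hg₂P hf hfP
  omega

/-- The triples in a vector space whose first entry, the pivot, lies in `W` and whose other two
entries can be reduced modulo the pivot to a pair in `S`. -/
def pivotTriples (F : Type*) {V : Type*} [Ring F] [AddCommGroup V] [Module F V]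
    (W : Submodule F V) (S : Set (V × V)) : Set (V × V × V) :=
  {x | x.1 ∈ W ∧ ∃ μ ν : F, (x.2.1 - μ • x.1, x.2.2 - ν • x.1) ∈ S}

lemma mem_pivotTriples_of_finrank_mul_lt [FiniteDimensional F E] [FiniteDimensional F P]
    (hE : E ≤ degreeLT F k) (hc : c ∉ degreeLT F k) (hℓ : 0 < ℓ)
    (hf : f ∈ E ⊔ Submodule.span F {c}) (hg₁ : g₁ ∈ E ⊔ Submodule.span F {c})
    (hg₂ : g₂ ∈ E ⊔ Submodule.span F {c}) (hfE : f ∉ E)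
    (hfP : f ∈ P) (hg₁P : g₁ ∈ P) (hg₂P : g₂ ∈ P)
    (hdim : Module.finrank F ↥(P * (E ⊔ Submodule.span F {c})) + (k - ℓ) +
      (k + k - 1 - c.natDegree) < 3 * Module.finrank F E + 1) :
    (f, g₁, g₂) ∈ pivotTriples F (E ⊔ Submodule.span F {c}) (lowHeightPairs F k ℓ) := by
  have hdeg := natDegree_eq_of_degree_eq (degree_eq_of_mem_sup_span_singleton hE hc hf hfE)
  have hR := finrank_sup_span_singleton (F := F) (fun h => hc (hE h))
  obtain ⟨μ, hμ⟩ := exists_sub_smul_mem_of_mem_sup_span_singleton hf hfE hg₁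
  obtain ⟨ν, hν⟩ := exists_sub_smul_mem_of_mem_sup_span_singleton hf hfE hg₂
  have hER : E ≤ E ⊔ Submodule.span F {c} := le_sup_left
  refine ⟨hf, μ, ν, mem_lowHeightPairs_of_finrank_mul_lt hE hER hℓ (hE hμ) (hE hν)
    (sub_mem hg₁P (P.smul_mem _ hfP)) (sub_mem hg₂P (P.smul_mem _ hfP))
    (ne_of_mem_of_not_mem (zero_mem E) hfE).symm hfP ?_⟩
  omega

/-- The set `Γ`, with a general subspace `R` and a general bound `D` on the dimension. -/
def exceptionalTriples (E R : Submodule F F[X]) (D : ℕ) : Set (F[X] × F[X] × F[X]) :=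
  {x | (x.1 ∈ R ∧ x.2.1 ∈ R ∧ x.2.2 ∈ R) ∧ ¬(x.1 ∈ E ∧ x.2.1 ∈ E ∧ x.2.2 ∈ E) ∧
    Module.finrank F (mulSpace F (Submodule.span F {x.1, x.2.1, x.2.2}) R) ≤ D}

/-- The cyclic rotation `(a, b, c) ↦ (b, c, a)`. -/
def rotateTriple (α : Type*) : Equiv.Perm (α × α × α) :=
  (Equiv.prodComm α (α × α)).trans (Equiv.prodAssoc α α α)

lemma rotate_mem_pivotTriples_of_mem_exceptionalTriples [FiniteDimensional F E]
    (hE : E ≤ degreeLT F k) (hc : c ∉ degreeLT F k) (hℓ : 0 < ℓ) {D : ℕ}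
    (hD : D + (k - ℓ) + (k + k - 1 - c.natDegree) < 3 * Module.finrank F E + 1)
    {x : F[X] × F[X] × F[X]} (hx : x ∈ exceptionalTriples E (E ⊔ Submodule.span F {c}) D) :
    let T := pivotTriples F (E ⊔ Submodule.span F {c}) (lowHeightPairs F k ℓ)
    x ∈ T ∨ rotateTriple _ x ∈ T ∨ rotateTriple _ (rotateTriple _ x) ∈ T := by
  obtain ⟨f₁, f₂, f₃⟩ := x
  obtain ⟨⟨h₁, h₂, h₃⟩, hnot, hdim⟩ := hx
  rw [mulSpace_eq_mul] at hdim
  have hlt := (Nat.add_le_add_right (Nat.add_le_add_right hdim _) _).trans_lt hD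
  have : FiniteDimensional F (Submodule.span F {f₁, f₂, f₃}) :=
    FiniteDimensional.span_of_finite F (Set.toFinite _)
  have hP : ∀ f ∈ ({f₁, f₂, f₃} : Set F[X]), f ∈ Submodule.span F {f₁, f₂, f₃} :=
    fun _ hf => Submodule.subset_span hf
  have hP₁ := hP f₁ (by simp)
  have hP₂ := hP f₂ (by simp)
  have hP₃ := hP f₃ (by simp)
  by_cases hE₁ : f₁ ∈ E
  · by_cases hE₂ : f₂ ∈ E
    · exact .inr (.inr (mem_pivotTriples_of_finrank_mul_lt hE hc hℓ h₃ h₁ h₂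
        (fun hE₃ => hnot ⟨hE₁, hE₂, hE₃⟩) hP₃ hP₁ hP₂ hlt))
    · exact .inr (.inl (mem_pivotTriples_of_finrank_mul_lt hE hc hℓ h₂ h₃ h₁ hE₂ hP₂ hP₃ hP₁ hlt))
  · exact .inl (mem_pivotTriples_of_finrank_mul_lt hE hc hℓ h₁ h₂ h₃ hE₁ hP₁ hP₂ hP₃ hlt)

end Exceptional

section Counting

lemma encard_le_three_mul {α : Type*} (σ : Equiv.Perm α) {s t : Set α}
    (h : ∀ x ∈ s, x ∈ t ∨ σ x ∈ t ∨ σ (σ x) ∈ t) : s.encard ≤ 3 * t.encard := by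
  have hσ := Set.encard_preimage_of_bijective σ.bijective
  calc s.encard ≤ (t ∪ (σ ⁻¹' t ∪ σ ⁻¹' (σ ⁻¹' t))).encard := Set.encard_le_encard h
    _ ≤ t.encard + (t.encard + t.encard) := by
      grw [Set.encard_union_le, Set.encard_union_le, hσ, hσ, hσ]
    _ = 3 * t.encard := by ring

variable {F : Type*} [Field F] [Fintype F]

lemma encard_coe_submodule {V : Type*} [AddCommGroup V] [Module F V] (W : Submodule F V)
    [FiniteDimensional F W] :
    (W : Set V).encard = (Fintype.card F : ℕ∞) ^ Module.finrank F W := by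
  have : Finite W := Module.finite_of_finite F
  rw [← ENat.card_coe_set_eq, SetLike.coe_sort_coe, ENat.card_eq_coe_natCard,
    Module.natCard_eq_pow_finrank (K := F), Nat.card_eq_fintype_card, Nat.cast_pow]

lemma encard_degreeLT (n : ℕ) :
    (degreeLT F n : Set F[X]).encard = (Fintype.card F : ℕ∞) ^ n := by
  rw [encard_coe_submodule, finrank_degreeLT]

lemma encard_lowHeightPairs_le {k ℓ : ℕ} (hℓ : ℓ ≤ k) :
    (lowHeightPairs F k ℓ).encard ≤ (Fintype.card F : ℕ∞) ^ (k + 2 + ℓ) := by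
  let B (m : ℕ) : Set (F[X] × F[X] × F[X]) :=
    degreeLT F (k - m) ×ˢ (degreeLT F (m + 1) : Set F[X]) ×ˢ (degreeLT F (m + 1) : Set F[X])
  have hcover : lowHeightPairs F k ℓ ⊆
      ⋃ m ∈ Finset.range ℓ, (fun x : F[X] × F[X] × F[X] => (x.1 * x.2.1, x.1 * x.2.2)) '' B m := by
    rintro _ ⟨m, hm, d, hd, a, ha, b, hb, rfl⟩
    exact Set.mem_biUnion (Finset.mem_range.2 hm) ⟨(d, a, b), ⟨hd, ha, hb⟩, rfl⟩
  have hB : ∀ m ∈ Finset.range ℓ,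
      (B m).encard = (Fintype.card F : ℕ∞) ^ (k + 2) * (Fintype.card F : ℕ∞) ^ m := by
    intro m hm
    have hm : m < ℓ := Finset.mem_range.1 hm
    rw [Set.encard_prod, Set.encard_prod, encard_degreeLT, encard_degreeLT, ← pow_add, ← pow_add,
      ← pow_add]
    congr 1
    omega
  have hgeom : ∑ m ∈ Finset.range ℓ, Fintype.card F ^ m ≤ Fintype.card F ^ ℓ :=
    (Nat.geomSum_lt Fintype.one_lt_card fun _ => Finset.mem_range.1).le
  calc (lowHeightPairs F k ℓ).encard
      ≤ ∑ m ∈ Finset.range ℓ, (B m).encard :=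
        (Set.encard_le_encard hcover).trans <| (Finset.set_encard_biUnion_le _ _).trans <|
          Finset.sum_le_sum fun _ _ => Set.encard_image_le _ _
    _ = (Fintype.card F : ℕ∞) ^ (k + 2) * ∑ m ∈ Finset.range ℓ, (Fintype.card F : ℕ∞) ^ m := by
        rw [Finset.sum_congr rfl hB, Finset.mul_sum]
    _ ≤ (Fintype.card F : ℕ∞) ^ (k + 2 + ℓ) := by
        rw [pow_add _ (k + 2)]
        gcongr
        exact_mod_cast hgeom

lemma encard_pivotTriples_le {V : Type*} [AddCommGroup V] [Module F V] (W : Submodule F V)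
    [FiniteDimensional F W] (S : Set (V × V)) :
    (pivotTriples F W S).encard ≤
      (Fintype.card F : ℕ∞) ^ (Module.finrank F W + 2) * S.encard := by
  have hcover : pivotTriples F W S ⊆
      (fun x : (V × F × F) × V × V => (x.1.1, x.2.1 + x.1.2.1 • x.1.1, x.2.2 + x.1.2.2 • x.1.1)) ''
        (((W : Set V) ×ˢ Set.univ) ×ˢ S) := by
    rintro ⟨f, g₁, g₂⟩ ⟨hf, μ, ν, h⟩
    exact ⟨((f, μ, ν), _), ⟨⟨hf, Set.mem_univ _⟩, h⟩, by simp⟩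
  have huniv : (Set.univ : Set (F × F)).encard = (Fintype.card F : ℕ∞) ^ 2 := by
    simp [Set.encard_univ, ENat.card_eq_coe_fintype_card, sq]
  calc _ ≤ _ := Set.encard_le_encard hcover
    _ ≤ _ := Set.encard_image_le _ _
    _ = _ := by rw [Set.encard_prod, Set.encard_prod, huniv, encard_coe_submodule, pow_add]

theorem encard_exceptionalTriples_le {E : Submodule F F[X]} {c : F[X]} {k ℓ D : ℕ}
    (hE : E ≤ degreeLT F k) (hc : c ∉ degreeLT F k) (hℓ : 0 < ℓ) (hℓk : ℓ ≤ k)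
    (hD : D + (k - ℓ) + (k + k - 1 - c.natDegree) < 3 * Module.finrank F E + 1) :
    (exceptionalTriples E (E ⊔ Submodule.span F {c}) D).encard ≤
      3 * (Fintype.card F : ℕ∞) ^ (Module.finrank F E + k + ℓ + 5) := by
  have : FiniteDimensional F E := Submodule.finiteDimensional_of_le hE
  grw [encard_le_three_mul (rotateTriple F[X]) fun _ =>
    rotate_mem_pivotTriples_of_mem_exceptionalTriples hE hc hℓ hD,
    encard_pivotTriples_le, encard_lowHeightPairs_le hℓk]
  rw [finrank_sup_span_singleton fun h => hc (hE h), ← pow_add]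
  apply le_of_eq
  congr 2
  omega

end Counting

lemma one_sub_le_div_add {K : Type*} [Field K] [LinearOrder K] [IsStrictOrderedRing K]
    {N g ε : K} (hN : 0 < N) (hg : 0 ≤ g) (h : g ≤ ε * N) : 1 - ε ≤ N / (N + g) := by
  have hε : 0 ≤ ε := nonneg_of_mul_nonneg_left (hg.trans h) hN
  rw [le_div_iff₀ (by positivity)]
  nlinarith [mul_nonneg hε hg]

theorem stmt19_general {F : Type*} [Field F] [Fintype F] {k t n : ℕ} (hk : n + 5 ≤ k)
    (ht : n + 5 ≤ t) (E' : Submodule F F[X]) (hE : E' ≤ degreeLT F k)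
    (hcodim : Module.finrank F E' + 1 = k) (c : F[X])
    (hc : c.degree = ((k - 1 + t : ℕ) : WithBot ℕ)) :
    1 - 3 * (Fintype.card F : ℚ) ^ 7 / (Fintype.card F : ℚ) ^ n ≤
      (Nat.card E' : ℚ) ^ 3 / ((Nat.card E' : ℚ) ^ 3 +
        ((exceptionalTriples E' (E' ⊔ Submodule.span F {c}) (2 * k + 2)).ncard : ℚ)) := by
  have : FiniteDimensional F E' := Submodule.finiteDimensional_of_le hE
  have : 0 < (Fintype.card F : ℚ) := by exact_mod_cast Fintype.card_pos
  have hcE : c ∉ degreeLT F k := by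
    rw [mem_degreeLT, hc, Nat.cast_lt]
    omega
  have hcount := encard_exceptionalTriples_le (ℓ := k - n) (D := 2 * k + 2) hE hcE (by omega)
    (by omega) (by rw [natDegree_eq_of_degree_eq_some hc]; omega)
  have hcountQ : ((exceptionalTriples E' (E' ⊔ Submodule.span F {c}) (2 * k + 2)).ncard : ℚ) ≤
      3 * (Fintype.card F : ℚ) ^ (Module.finrank F E' + k + (k - n) + 5) := by
    exact_mod_cast ENat.toNat_le_of_le_natCast (by exact_mod_cast hcount)
  have hcard : (Nat.card E' : ℚ) = (Fintype.card F : ℚ) ^ Module.finrank F E' := by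
    rw [Module.natCard_eq_pow_finrank (K := F), Nat.card_eq_fintype_card, Nat.cast_pow]
  refine one_sub_le_div_add (by rw [hcard]; positivity) (by positivity) (hcountQ.trans_eq ?_)
  rw [hcard, div_mul_eq_mul_div, eq_div_iff (by positivity), ← pow_mul, mul_assoc, mul_assoc,
    ← pow_add, ← pow_add]
  congr 2
  omega

lemma three_mul_pow_seven_div_pow_twelve_le {K : Type*} [Field K] [LinearOrder K]
    [IsStrictOrderedRing K] {q : K} (hq : 2 ≤ q) : 3 * q ^ 7 / q ^ 12 ≤ 1 / q ^ 2 := by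
  have : 0 < q := by linarith
  have hcube : 3 ≤ q ^ 3 := by nlinarith [pow_le_pow_left₀ zero_le_two hq 3]
  rw [div_le_div_iff₀ (by positivity) (by positivity)]
  calc 3 * q ^ 7 * q ^ 2 = 3 * q ^ 9 := by ring
    _ ≤ q ^ 3 * q ^ 9 := by gcongr
    _ = 1 * q ^ 12 := by ring

/-- For `q ≥ 11`, `k, t ≥ 17`, `E′` a codimension-1 subspace of `F_q[x]_{<k}`,
`c` of degree `k−1+t` and `R = E′ ⊕ span(c)`: letting
`Γ = {(f₁,f₂,f₃) ∈ R³ \ E′³ : dim(span{f₁,f₂,f₃}·R) ≤ 2k+2}`, one has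
`|E′|³ / (|E′|³ + |Γ|) ≥ 1 − 1/q²`; i.e. a uniformly random triple in `R³` with
`dim(span{f₁,f₂,f₃}·R) ≤ 2k+2` lies in `E′³` with probability at least `1 − 1/q²`. -/
theorem stmt19 {F : Type*} [Field F] [Fintype F]
    (hq : 11 ≤ Fintype.card F) {k t : ℕ} (hk : 17 ≤ k) (ht : 17 ≤ t)
    (E' : Submodule F (Polynomial F)) (hE : E' ≤ Polynomial.degreeLT F k)
    (hcodim : Module.finrank F E' + 1 = k)
    (c : Polynomial F) (hc : c.degree = ((k - 1 + t : ℕ) : WithBot ℕ)) :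
    let R : Submodule F (Polynomial F) := E' ⊔ Submodule.span F {c}
    let Γ : Set (Polynomial F × Polynomial F × Polynomial F) :=
      {x | (x.1 ∈ R ∧ x.2.1 ∈ R ∧ x.2.2 ∈ R) ∧
        ¬(x.1 ∈ E' ∧ x.2.1 ∈ E' ∧ x.2.2 ∈ E') ∧
        Module.finrank F (mulSpace F (Submodule.span F {x.1, x.2.1, x.2.2}) R) ≤
          2 * k + 2}
    1 - 1 / (Fintype.card F : ℚ) ^ 2 ≤
      (Nat.card E' : ℚ) ^ 3 / ((Nat.card E' : ℚ) ^ 3 + (Set.ncard Γ : ℚ)) :=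
  (sub_le_sub_left (three_mul_pow_seven_div_pow_twelve_le (by norm_cast; omega)) 1).trans
    (stmt19_general (n := 12) hk ht E' hE hcodim c hc)
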